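/- The reduction from maximum set coverage to SWM-PB is correct: let A be a finite set, let d_1, …, d_m be subsets of A, and let k ∈ ℕ. Construct a PB instance with one voter per element a ∈ A and m unit-cost projects forming a single non-contradictory group, where voter a sets fund allocation 1, complementarity answer 0, and approval set s^a = { j ∈ [m] : a ∈ d_j }. Then for every set of projects Q ⊆ [m], the social welfare satisfies U(Q) = Σ_{a∈A} min(1, |Q ∩ s^a|) = |⋃_{j∈Q} d_j|; consequently, the maximum social welfare over Q with |Q| ≤ k equals the maximum of |⋃_{j∈Q} d_j| over Q with |Q| ≤ k, and a set Q with |Q| ≤ k maximizes U if and only if it maximizes coverage. -/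

import Mathlib

/-!
Correctness of the reduction from maximum set coverage to SWM-PB.
-/

open Finset

/-- The overlap utility `u_a(Q) = min(f^a, |Q ∩ s^a|)` that a voter with fund allocation `f` and
approval set `s` derives from the outcome `Q`. All costs are `1`, so that `f` is a number of
projects. -/
def overlapUtility {ι : Type*} [DecidableEq ι] (f : ℕ) (s Q : Finset ι) : ℕ :=
  min f #(Q ∩ s)

/-- The social welfare `U(Q) = Σ_a u_a(Q)`, the objective of SWM-PB with one group, for voters `β`
with fund allocations `f` and approval sets `s`. -/
def socialWelfare {ι β : Type*} [DecidableEq ι] [Fintype β] (f : β → ℕ) (s : β → Finset ι)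
    (Q : Finset ι) : ℕ :=
  ∑ a, overlapUtility (f a) (s a) Q

section

variable {ι β : Type*} [DecidableEq ι]

lemma overlapUtility_one (s Q : Finset ι) :
    overlapUtility 1 s Q = if (Q ∩ s).Nonempty then 1 else 0 := by
  unfold overlapUtility
  split_ifs with h
  · exact min_eq_left h.card_pos
  · rw [not_nonempty_iff_eq_empty.mp h, card_empty, Nat.min_zero]

lemma socialWelfare_one [Fintype β] (s : β → Finset ι) (Q : Finset ι) :
    socialWelfare (fun _ => 1) s Q = #{a | (Q ∩ s a).Nonempty} := by
  simp only [socialWelfare, overlapUtility_one, card_filter]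

lemma inter_nonempty_iff_mem_biUnion [DecidableEq β] {d : ι → Finset β} {s : Finset ι} {a : β}
    (hs : ∀ j, j ∈ s ↔ a ∈ d j) (Q : Finset ι) :
    (Q ∩ s).Nonempty ↔ a ∈ Q.biUnion d := by
  simp only [Finset.Nonempty, mem_inter, mem_biUnion, hs]

variable [Fintype β] [DecidableEq β] (d : ι → Finset β) (s : β → Finset ι)

lemma socialWelfare_one_eq_card_biUnion (hs : ∀ a j, j ∈ s a ↔ a ∈ d j) (Q : Finset ι) :
    socialWelfare (fun _ => 1) s Q = #(Q.biUnion d) := by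
  simp only [socialWelfare_one, inter_nonempty_iff_mem_biUnion (hs _), filter_univ_mem]

theorem msc_reduction_correct_general (hs : ∀ a j, j ∈ s a ↔ a ∈ d j) :
    (∀ Q, socialWelfare (fun _ => 1) s Q = #(Q.biUnion d)) ∧
      (∀ 𝓕 : Finset (Finset ι),
        𝓕.sup (socialWelfare (fun _ => 1) s) = 𝓕.sup fun Q => #(Q.biUnion d)) ∧
      ∀ (feasible : Finset ι → Prop) (Q : Finset ι),
        (∀ R, feasible R → socialWelfare (fun _ => 1) s R ≤ socialWelfare (fun _ => 1) s Q) ↔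
          ∀ R, feasible R → #(R.biUnion d) ≤ #(Q.biUnion d) := by
  have welfare_eq := socialWelfare_one_eq_card_biUnion d s hs
  exact ⟨welfare_eq, fun 𝓕 => sup_congr rfl fun Q _ => welfare_eq Q,
    fun feasible Q => by simp only [welfare_eq]⟩

end

/-- Given a finite universal set `A` (the type `β`), subsets
`d 1, …, d m` of it, and `k ∈ ℕ`, build the PB instance with one voter per element
`a`, unit costs, one non-contradictory group, fund allocation `1`, complementarity
answer `0`, and approval set `s a = {j : a ∈ d j}`. Then the social welfare satisfies
`U Q = Σ_a min 1 |Q ∩ s a| = |⋃_{j ∈ Q} d j|` for every `Q`; consequently the maximum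
social welfare over `|Q| ≤ k` equals the maximum coverage over `|Q| ≤ k`, and `Q`
maximizes social welfare iff it maximizes coverage. -/
theorem msc_reduction_correct {β : Type*} [Fintype β] [DecidableEq β]
    (m k : ℕ) (d : Fin m → Finset β) :
    (∀ Q : Finset (Fin m),
        (∑ a : β, min 1 ((Q ∩ Finset.univ.filter fun j => a ∈ d j).card)) =
          (Q.biUnion d).card) ∧
      ((Finset.univ.powerset.filter fun Q : Finset (Fin m) => Q.card ≤ k).sup
          (fun Q => ∑ a : β, min 1 ((Q ∩ Finset.univ.filter fun j => a ∈ d j).card)) =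
        (Finset.univ.powerset.filter fun Q : Finset (Fin m) => Q.card ≤ k).sup
          (fun Q => (Q.biUnion d).card)) ∧
      (∀ Q : Finset (Fin m), Q.card ≤ k →
        ((∀ R : Finset (Fin m), R.card ≤ k →
            (∑ a : β, min 1 ((R ∩ Finset.univ.filter fun j => a ∈ d j).card)) ≤
              ∑ a : β, min 1 ((Q ∩ Finset.univ.filter fun j => a ∈ d j).card)) ↔
          (∀ R : Finset (Fin m), R.card ≤ k →
            (R.biUnion d).card ≤ (Q.biUnion d).card))) := by
  obtain ⟨welfare_eq, sup_eq, maximizes_iff⟩ := msc_reduction_correct_general d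
    (fun a => univ.filter fun j => a ∈ d j) fun a j => mem_filter_univ j
  exact ⟨welfare_eq, sup_eq _, fun Q _ => maximizes_iff (#· ≤ k) Q⟩
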